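/- arXiv:1502.02771 — 6 statements merged into one kernel-verified Lean document; each statement's English description precedes it below -/
import Mathlib

section
/- Let X be a set and δ a Lodato proximity on X. Define the relation ν on subsets of X by A ν B iff it is NOT the case that A is δ-strongly far from B. Then ν is a basic proximity, i.e. for all A, B, C ⊆ X: (P0) A ν B → B ν A; (P1) A ν B → A ≠ ∅ and B ≠ ∅; (P2) A ∩ B ≠ ∅ → A ν B; (P3) A ν (B ∪ C) ↔ (A ν B or A ν C). -/
/-- A Lodato proximity on a set (type) `X`: a relation on subsets of `X`
satisfying axioms (P0)–(P4). -/
structure LodatoProximity (X : Type*) where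
  rel : Set X → Set X → Prop
  symm : ∀ A B : Set X, rel A B → rel B A
  nonempty_of_rel : ∀ A B : Set X, rel A B → A ≠ ∅ ∧ B ≠ ∅
  rel_of_inter : ∀ A B : Set X, A ∩ B ≠ ∅ → rel A B
  rel_union : ∀ A B C : Set X, rel A (B ∪ C) ↔ rel A B ∨ rel A C
  lodato : ∀ A B C : Set X, rel A B → (∀ b ∈ B, rel {b} C) → rel A C

/-- `A` is δ-strongly far from `B`: `A ≁ B` and there is `C ⊆ X` with
`A ≁ X \ C` and `C ≁ B`. -/
def LodatoProximity.StronglyFar {X : Type*} (δ : LodatoProximity X)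
    (A B : Set X) : Prop :=
  ¬ δ.rel A B ∧ ∃ C : Set X, ¬ δ.rel A Cᶜ ∧ ¬ δ.rel C B

/-!
Call `c` a separator of `a` from `b` when `a ≁ cᶜ` and `c ≁ b`. The complement of a separator of
`a` from `b` separates `b` from `a`, which gives symmetry, and `⊥` separates itself from everything.
For (P3), a separator of `a` from `b ⊔ c` separates `a` from both `b` and `c`, while the meet of a
separator of `a` from `b` with one of `a` from `c` separates `a` from `b ⊔ c`. Points play
no role, so the argument takes place in an arbitrary Boolean algebra.
-/

/-- A basic (Čech) proximity: a relation satisfying (P0)–(P3), stated for elements of a lattice with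
a least element in place of subsets of a set. -/
structure IsBasicProximity {α : Type*} [Lattice α] [OrderBot α] (r : α → α → Prop) : Prop where
  symm : ∀ {a b : α}, r a b → r b a
  ne_bot : ∀ {a b : α}, r a b → a ≠ ⊥ ∧ b ≠ ⊥
  of_inf_ne_bot : ∀ {a b : α}, a ⊓ b ≠ ⊥ → r a b
  sup_right_iff : ∀ a b c : α, r a (b ⊔ c) ↔ r a b ∨ r a c

/-- `a` is strongly far from `b` with respect to `r`: the notion `LodatoProximity.StronglyFar`
for an arbitrary relation on a type with complements. -/
def StronglyFar {α : Type*} [Compl α] (r : α → α → Prop) (a b : α) : Prop :=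
  ¬ r a b ∧ ∃ c : α, ¬ r a cᶜ ∧ ¬ r c b

namespace IsBasicProximity

section Lattice

variable {α : Type*} [Lattice α] [OrderBot α] {r : α → α → Prop} {a b c : α}

theorem mono_right (hr : IsBasicProximity r) (hbc : b ≤ c) (hab : r a b) : r a c := by
  rw [← sup_eq_right.mpr hbc]
  exact (hr.sup_right_iff a b c).mpr (Or.inl hab)

theorem mono_left (hr : IsBasicProximity r) (hab : a ≤ b) (hac : r a c) : r b c :=
  hr.symm (hr.mono_right hab (hr.symm hac))

theorem not_rel_bot_left (hr : IsBasicProximity r) (b : α) : ¬ r ⊥ b :=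
  fun h => (hr.ne_bot h).1 rfl

theorem not_rel_sup_right_iff (hr : IsBasicProximity r) :
    ¬ r a (b ⊔ c) ↔ ¬ r a b ∧ ¬ r a c := by
  rw [hr.sup_right_iff, not_or]

end Lattice

variable {α : Type*} [BooleanAlgebra α] {r : α → α → Prop} {a b c : α}

theorem stronglyFar_symm (hr : IsBasicProximity r) (h : StronglyFar r a b) :
    StronglyFar r b a := by
  obtain ⟨hab, s, has, hsb⟩ := h
  have hbs : ¬ r b sᶜᶜ := by
    rw [compl_compl]
    exact mt hr.symm hsb
  exact ⟨mt hr.symm hab, sᶜ, hbs, mt hr.symm has⟩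

theorem stronglyFar_bot_left (hr : IsBasicProximity r) (b : α) : StronglyFar r ⊥ b :=
  ⟨hr.not_rel_bot_left b, ⊥, hr.not_rel_bot_left _, hr.not_rel_bot_left b⟩

theorem stronglyFar_bot_right (hr : IsBasicProximity r) (a : α) : StronglyFar r a ⊥ :=
  hr.stronglyFar_symm (hr.stronglyFar_bot_left a)

theorem stronglyFar_anti_right (hr : IsBasicProximity r) (hbc : b ≤ c)
    (h : StronglyFar r a c) : StronglyFar r a b := by
  obtain ⟨hac, s, has, hsc⟩ := h
  exact ⟨mt (hr.mono_right hbc) hac, s, has, mt (hr.mono_right hbc) hsc⟩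

theorem stronglyFar_sup_right (hr : IsBasicProximity r) (hb : StronglyFar r a b)
    (hc : StronglyFar r a c) : StronglyFar r a (b ⊔ c) := by
  obtain ⟨hab, s, has, hsb⟩ := hb
  obtain ⟨hac, t, hat, htc⟩ := hc
  have hast : ¬ r a (s ⊓ t)ᶜ := by
    rw [compl_inf]
    exact hr.not_rel_sup_right_iff.mpr ⟨has, hat⟩
  have hstbc : ¬ r (s ⊓ t) (b ⊔ c) :=
    hr.not_rel_sup_right_iff.mpr
      ⟨mt (hr.mono_left inf_le_left) hsb, mt (hr.mono_left inf_le_right) htc⟩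
  exact ⟨hr.not_rel_sup_right_iff.mpr ⟨hab, hac⟩, s ⊓ t, hast, hstbc⟩

theorem stronglyFar_sup_right_iff (hr : IsBasicProximity r) :
    StronglyFar r a (b ⊔ c) ↔ StronglyFar r a b ∧ StronglyFar r a c :=
  ⟨fun h => ⟨hr.stronglyFar_anti_right le_sup_left h, hr.stronglyFar_anti_right le_sup_right h⟩,
    fun h => hr.stronglyFar_sup_right h.1 h.2⟩

end IsBasicProximity

theorem LodatoProximity.isBasicProximity {X : Type*} (δ : LodatoProximity X) :
    IsBasicProximity δ.rel where
  symm := δ.symm _ _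
  ne_bot := δ.nonempty_of_rel _ _
  of_inf_ne_bot := δ.rel_of_inter _ _
  sup_right_iff := δ.rel_union

theorem not_stronglyFar_isBasicProximity_general {α : Type*} [BooleanAlgebra α]
    {r : α → α → Prop} (hr : IsBasicProximity r) :
    IsBasicProximity fun a b => ¬ StronglyFar r a b where
  symm := mt hr.stronglyFar_symm
  ne_bot {a b} h :=
    ⟨fun ha => h (ha ▸ hr.stronglyFar_bot_left b), fun hb => h (hb ▸ hr.stronglyFar_bot_right a)⟩
  of_inf_ne_bot hab h := h.1 (hr.of_inf_ne_bot hab)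
  sup_right_iff a b c := by rw [hr.stronglyFar_sup_right_iff, not_and_or]

/-- The relation `ν` defined by `A ν B` iff `A` is not δ-strongly far from `B`
is a basic proximity: it satisfies (P0)–(P3). -/
theorem not_stronglyFar_isBasicProximity {X : Type*} (δ : LodatoProximity X) :
    (∀ A B : Set X, ¬ δ.StronglyFar A B → ¬ δ.StronglyFar B A) ∧
    (∀ A B : Set X, ¬ δ.StronglyFar A B → A ≠ ∅ ∧ B ≠ ∅) ∧
    (∀ A B : Set X, A ∩ B ≠ ∅ → ¬ δ.StronglyFar A B) ∧
    (∀ A B C : Set X,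
      (¬ δ.StronglyFar A (B ∪ C)) ↔ (¬ δ.StronglyFar A B ∨ ¬ δ.StronglyFar A C)) := by
  obtain ⟨hP0, hP1, hP2, hP3⟩ := not_stronglyFar_isBasicProximity_general δ.isBasicProximity
  exact ⟨fun _ _ => hP0, fun _ _ => hP1, fun _ _ => hP2, hP3⟩
end

section
/- Let X be a topological space and δ a compatible Lodato proximity on X. If A is δ-strongly far from B, then A is δ̂-strongly far from B; that is, there exist subsets E, C ⊆ X such that A ⊆ interior(closure E), B ⊆ interior(closure C), and interior(closure E) ∩ interior(closure C) = ∅. -/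
/-- `δ` is compatible with the topology of `X`:
`closure A = {x : {x} δ A}` for every `A`. -/
def LodatoProximity.Compatible {X : Type*} [TopologicalSpace X]
    (δ : LodatoProximity X) : Prop :=
  ∀ A : Set X, closure A = {x : X | δ.rel {x} A}

theorem disjoint_interior_closure_of_isOpen_right {X : Type*} [TopologicalSpace X] {U V : Set X}
    (hUV : Disjoint U V) (hV : IsOpen V) :
    Disjoint (interior (closure U)) (interior (closure V)) := by
  have hUV' : Disjoint (interior (closure U)) V :=
    (hUV.closure_left hV).mono_left interior_subset
  exact (hUV'.closure_right isOpen_interior).mono_right interior_subset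

theorem exists_disjoint_interior_closure_of_separatedNhds {X : Type*} [TopologicalSpace X]
    {A B : Set X} (h : SeparatedNhds A B) :
    ∃ E C : Set X, A ⊆ interior (closure E) ∧ B ⊆ interior (closure C) ∧
      interior (closure E) ∩ interior (closure C) = ∅ := by
  obtain ⟨U, V, hU, hV, hAU, hBV, hUV⟩ := h
  exact ⟨U, V, hAU.trans hU.subset_interior_closure, hBV.trans hV.subset_interior_closure,
    (disjoint_interior_closure_of_isOpen_right hUV hV).inter_eq⟩

section Relation

variable {X : Type*} [TopologicalSpace X] {rel : Set X → Set X → Prop} {A B S : Set X}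

theorem subset_interior_of_not_rel_compl (hmono : Monotone rel)
    (hclosure : ∀ T, closure T ⊆ {x | rel {x} T}) (hAS : ¬ rel A Sᶜ) : A ⊆ interior S := by
  intro x hxA
  by_contra hxS
  have hx : x ∈ closure Sᶜ := by rwa [closure_compl]
  exact hAS (hmono (Set.singleton_subset_iff.2 hxA) Sᶜ (hclosure Sᶜ hx))

theorem separatedNhds_of_not_rel [Std.Symm rel] (hmono : Monotone rel)
    (hclosure : ∀ T, closure T ⊆ {x | rel {x} T}) (hAS : ¬ rel A Sᶜ) (hSB : ¬ rel S B) :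
    SeparatedNhds A B := by
  have hBS : ¬ rel B Sᶜᶜ := by
    rw [compl_compl]
    exact fun hBS => hSB (symm_of rel hBS)
  exact ⟨interior S, interior Sᶜ, isOpen_interior, isOpen_interior,
    subset_interior_of_not_rel_compl hmono hclosure hAS,
    subset_interior_of_not_rel_compl hmono hclosure hBS,
    disjoint_compl_right.mono interior_subset interior_subset⟩

theorem stronglyFar_imp_hat_stronglyFar_general [Std.Symm rel] (hmono : Monotone rel)
    (hclosure : ∀ T, closure T ⊆ {x | rel {x} T}) (h : ∃ S, ¬ rel A Sᶜ ∧ ¬ rel S B) :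
    ∃ E C : Set X, A ⊆ interior (closure E) ∧ B ⊆ interior (closure C) ∧
      interior (closure E) ∩ interior (closure C) = ∅ := by
  obtain ⟨S, hAS, hSB⟩ := h
  exact exists_disjoint_interior_closure_of_separatedNhds
    (separatedNhds_of_not_rel hmono hclosure hAS hSB)

end Relation

namespace LodatoProximity

variable {X : Type*} (δ : LodatoProximity X)

instance : Std.Symm δ.rel := ⟨δ.symm⟩

theorem monotone_rel : Monotone δ.rel := by
  intro A B hAB C hAC
  have hCB : δ.rel C (A ∪ B) := (δ.rel_union C A B).2 (Or.inl (δ.symm A C hAC))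
  rw [Set.union_eq_self_of_subset_left hAB] at hCB
  exact δ.symm C B hCB

end LodatoProximity

/-- If `A` is δ-strongly far from `B` (for a compatible Lodato proximity),
then `A` is δ̂-strongly far from `B`. -/
theorem stronglyFar_imp_hat_stronglyFar {X : Type*} [TopologicalSpace X]
    (δ : LodatoProximity X) (hδ : δ.Compatible) (A B : Set X)
    (h : δ.StronglyFar A B) :
    ∃ E C : Set X, A ⊆ interior (closure E) ∧ B ⊆ interior (closure C) ∧
      interior (closure E) ∩ interior (closure C) = ∅ :=
  stronglyFar_imp_hat_stronglyFar_general δ.monotone_rel (fun S => (hδ S).subset) h.2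
end

section
/- Let X be a T1 topological space and δ a compatible Lodato proximity on X, and let B, C be closed subsets of X. If every nonempty closed subset E of X with E ≁ B satisfies E ⩥ C (i.e., (X\B)⁺⁺ ⊆ (X\C)_⩥ in the hyperspace of nonempty closed sets), then C ⊆ B. -/
namespace LodatoProximity

variable {X : Type*}

theorem rel_comm (δ : LodatoProximity X) {A B : Set X} : δ.rel A B ↔ δ.rel B A :=
  ⟨δ.symm A B, δ.symm B A⟩

theorem rel_of_inter_nonempty (δ : LodatoProximity X) {A B : Set X} (h : (A ∩ B).Nonempty) :
    δ.rel A B :=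
  δ.rel_of_inter A B h.ne_empty

theorem rel_mono_right (δ : LodatoProximity X) {A B C : Set X} (hBC : B ⊆ C) (h : δ.rel A B) :
    δ.rel A C := by
  rw [← Set.union_eq_self_of_subset_left hBC]
  exact (δ.rel_union A B C).mpr (Or.inl h)

namespace Compatible

variable [TopologicalSpace X] {δ : LodatoProximity X} {A B : Set X}

theorem mem_closure_iff_rel (hδ : δ.Compatible) {x : X} : x ∈ closure A ↔ δ.rel {x} A :=
  Set.ext_iff.mp (hδ A) x

theorem rel_closure_right_iff (hδ : δ.Compatible) : δ.rel A (closure B) ↔ δ.rel A B :=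
  ⟨fun h => δ.lodato A (closure B) B h fun _ hb => hδ.mem_closure_iff_rel.mp hb,
    δ.rel_mono_right subset_closure⟩

theorem rel_closure_left_iff (hδ : δ.Compatible) : δ.rel (closure A) B ↔ δ.rel A B := by
  rw [δ.rel_comm, hδ.rel_closure_right_iff, δ.rel_comm]

end Compatible

end LodatoProximity

theorem subset_of_farMiss_subset_strongFarMiss_general {X : Type*} [TopologicalSpace X]
    (δ : LodatoProximity X) (hδ : δ.Compatible) (B C : Set X)
    (h : ∀ E : Set X, E.Nonempty → IsClosed E → ¬ δ.rel E B → ¬ δ.rel E C) :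
    C ⊆ closure B := by
  intro x hxC
  by_contra hxB
  -- The closure of `{x}` is a member of the hyperspace that is near exactly the sets near `x`.
  have far_B : ¬ δ.rel (closure {x}) B := by
    rwa [hδ.rel_closure_left_iff, ← hδ.mem_closure_iff_rel]
  have near_C : δ.rel (closure {x}) C :=
    δ.rel_of_inter_nonempty ⟨x, subset_closure rfl, hxC⟩
  exact h (closure {x}) (Set.singleton_nonempty x).closure isClosed_closure far_B near_C

/-- If every nonempty closed `E` with `E ≁ B` satisfies `E ⩥ C`
(i.e. `(X \ B)⁺⁺ ⊆ (X \ C)_⩥`), then `C ⊆ B`. -/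
theorem subset_of_farMiss_subset_strongFarMiss {X : Type*} [TopologicalSpace X]
    [T1Space X] (δ : LodatoProximity X) (hδ : δ.Compatible) (B C : Set X)
    (hB : IsClosed B) (hC : IsClosed C)
    (h : ∀ E : Set X, E.Nonempty → IsClosed E → ¬ δ.rel E B → δ.StronglyFar E C) :
    C ⊆ B :=
  (subset_of_farMiss_subset_strongFarMiss_general δ hδ B C fun E hE hEc hEB =>
    (h E hE hEc hEB).1).trans hB.closure_subset
end

section
/- Let X = ℚ with its usual (subspace) topology and δ_A the Alexandroff proximity on X. On CL(X), the hyperspace of nonempty closed subsets of X, the topology τ_δ⁺⁺ generated by the subbase {A⁺⁺ : A open in X} is not contained in the topology τ_⩥⁺ generated by the subbase {A_⩥ : A open in X}; that is, there is a τ_δ⁺⁺-open subset of CL(X) that is not τ_⩥⁺-open. -/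
/-!
Let `X` be a Hausdorff space and let `p : X` have no compact neighbourhood. If `{p} ⩥ Aᶜ` with `A`
open, then the intermediate set `C` is a neighbourhood of `p`, so `closure C` is not compact, which
forces `Aᶜ` to be compact. Conversely `{q} ⩥ Aᶜ` for every `q ∈ A` when `Aᶜ` is compact. Hence
`{q}` tends to `{p}` in `τ_⩥⁺` as `q` leaves the compact subsets of `X`. On the other hand
`q ↦ {q}` embeds `X` into `CL(X)` with `τ_δ⁺⁺`. If `τ_δ⁺⁺ ⊆ τ_⩥⁺`, it follows that `q` itself tends
to `p` as it leaves the compact sets, so `X` is compact, contradicting the choice of `p`.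
-/

/-- The Alexandroff proximity on a topological space:
`A δ_A B` iff the closures meet, or both closures are non-compact. -/
def alexRel {X : Type*} [TopologicalSpace X] (A B : Set X) : Prop :=
  (closure A ∩ closure B).Nonempty ∨
    (¬ IsCompact (closure A) ∧ ¬ IsCompact (closure B))

/-- `A` is δ_A-strongly far from `B`. -/
def alexStronglyFar {X : Type*} [TopologicalSpace X] (A B : Set X) : Prop :=
  ¬ alexRel A B ∧ ∃ C : Set X, ¬ alexRel A Cᶜ ∧ ¬ alexRel C B

/-- The hyperspace `CL(ℚ)` of nonempty closed subsets of `ℚ`. -/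
def CLQ : Type := {E : Set ℚ // E.Nonempty ∧ IsClosed E}

/-- The far-miss topology `τ_δ⁺⁺` on `CL(ℚ)` for the Alexandroff proximity,
generated by the subbase of all sets `A⁺⁺ = {E : E ≁ ℚ \ A}`, `A` open. -/
def tauFarMiss : TopologicalSpace CLQ :=
  TopologicalSpace.generateFrom
    {U : Set CLQ | ∃ A : Set ℚ, IsOpen A ∧ U = {E : CLQ | ¬ alexRel E.1 Aᶜ}}

/-- The strongly-far-miss topology `τ_⩥⁺` on `CL(ℚ)` for the Alexandroff
proximity, generated by the subbase of all sets
`A_⩥ = {E : E ⩥ ℚ \ A}`, `A` open. -/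
def tauStrongFarMiss : TopologicalSpace CLQ :=
  TopologicalSpace.generateFrom
    {U : Set CLQ | ∃ A : Set ℚ, IsOpen A ∧ U = {E : CLQ | alexStronglyFar E.1 Aᶜ}}

open Filter Set Topology

section Alexandroff

variable {X : Type*} [TopologicalSpace X] {A B : Set X}

lemma not_alexRel_iff :
    ¬ alexRel A B ↔
      Disjoint (closure A) (closure B) ∧ (IsCompact (closure A) ∨ IsCompact (closure B)) := by
  rw [alexRel, not_or, not_nonempty_iff_eq_empty, ← disjoint_iff_inter_eq_empty, not_and_or,
    not_not, not_not]

lemma alexStronglyFar.isCompact_closure_or_exists_isCompact_mem_nhdsSet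
    (h : alexStronglyFar A B) :
    IsCompact (closure B) ∨ ∃ K ∈ 𝓝ˢ (closure A), IsCompact K := by
  obtain ⟨-, C, hAC, hCB⟩ := h
  have hA : closure A ⊆ interior C := by
    simpa [closure_compl, disjoint_compl_right_iff_subset] using (not_alexRel_iff.1 hAC).1
  have hC : closure C ∈ 𝓝ˢ (closure A) :=
    mem_of_superset (subset_interior_iff_mem_nhdsSet.1 hA) subset_closure
  exact (not_alexRel_iff.1 hCB).2.symm.imp_right fun hcpt => ⟨closure C, hC, hcpt⟩

lemma alexStronglyFar_of_isCompact_closure [R1Space X] (hA : IsCompact (closure A))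
    (hB : IsCompact (closure B)) (hAB : Disjoint (closure A) (closure B)) :
    alexStronglyFar A B := by
  obtain ⟨U, V, hU, hV, hAU, hBV, hUV⟩ :=
    SeparatedNhds.of_isCompact_isCompact_isClosed hA hB isClosed_closure hAB
  refine ⟨not_alexRel_iff.2 ⟨hAB, .inl hA⟩, U, not_alexRel_iff.2 ⟨?_, .inl hA⟩,
    not_alexRel_iff.2 ⟨(hUV.closure_left hV).mono_right hBV, .inr hB⟩⟩
  rw [hU.isClosed_compl.closure_eq]
  exact disjoint_compl_right_iff_subset.2 hAU

end Alexandroff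

/-- The hyperspace `CL(X)` of nonempty closed subsets of `X`, encoded as a subtype so that `CL ℚ`
is definitionally `CLQ`. -/
abbrev CL (X : Type*) [TopologicalSpace X] : Type _ :=
  {E : Set X // E.Nonempty ∧ IsClosed E}

section Hyperspace

variable (X : Type*) [TopologicalSpace X]

/-- The far-miss topology `τ_δ⁺⁺` on `CL(X)` for the Alexandroff proximity; for `X = ℚ` it is
definitionally `tauFarMiss`. -/
abbrev farMissTopology : TopologicalSpace (CL X) :=
  .generateFrom {U | ∃ A : Set X, IsOpen A ∧ U = {E : CL X | ¬ alexRel E.1 Aᶜ}}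

/-- The strongly-far-miss topology `τ_⩥⁺` on `CL(X)` for the Alexandroff proximity; for `X = ℚ` it
is definitionally `tauStrongFarMiss`. -/
abbrev strongFarMissTopology : TopologicalSpace (CL X) :=
  .generateFrom {U | ∃ A : Set X, IsOpen A ∧ U = {E : CL X | alexStronglyFar E.1 Aᶜ}}

end Hyperspace

section Singleton

variable {X : Type*} [TopologicalSpace X]

/-- The singleton `{x}` as a point of the hyperspace `CL(X)`. -/
def CL.singleton [T1Space X] (x : X) : CL X :=
  ⟨{x}, singleton_nonempty x, isClosed_singleton⟩

lemma not_alexRel_singleton_compl_iff [T1Space X] {A : Set X} (hA : IsOpen A) {x : X} :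
    ¬ alexRel {x} Aᶜ ↔ x ∈ A := by
  simp [not_alexRel_iff, hA.isClosed_compl.closure_eq]

lemma isInducing_singleton_farMissTopology [T1Space X] :
    @IsInducing X (CL X) _ (farMissTopology X) CL.singleton := by
  let _ := farMissTopology X
  have hpreimage {A : Set X} (hA : IsOpen A) :
      CL.singleton ⁻¹' {E : CL X | ¬ alexRel E.1 Aᶜ} = A :=
    Set.ext fun _ => not_alexRel_singleton_compl_iff hA
  refine ⟨le_antisymm (continuous_iff_le_induced.1 (continuous_generateFrom_iff.2 ?_)) ?_⟩
  · rintro _ ⟨A, hA, rfl⟩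
    rwa [hpreimage hA]
  · exact fun A hA => ⟨_, .basic _ ⟨A, hA, rfl⟩, hpreimage hA⟩

lemma tendsto_singleton_cocompact_strongFarMissTopology [T2Space X] {p : X}
    (hp : ∀ K ∈ 𝓝 p, ¬ IsCompact K) :
    Tendsto CL.singleton (cocompact X) (@nhds _ (strongFarMissTopology X) (CL.singleton p)) := by
  refine TopologicalSpace.tendsto_nhds_generateFrom_iff.2 ?_
  rintro _ ⟨A, hA, rfl⟩ (hpA : alexStronglyFar {p} Aᶜ)
  have hAc : IsCompact (closure Aᶜ) :=
    hpA.isCompact_closure_or_exists_isCompact_mem_nhdsSet.resolve_right fun ⟨K, hK, hcpt⟩ =>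
      hp K (by simpa using hK) hcpt
  have hfar : ∀ q ∈ A, alexStronglyFar {q} Aᶜ := fun q hq =>
    alexStronglyFar_of_isCompact_closure (by simp) hAc
      (not_alexRel_iff.1 ((not_alexRel_singleton_compl_iff hA).2 hq)).1
  rw [hA.isClosed_compl.closure_eq] at hAc
  exact mem_of_superset (compl_compl A ▸ hAc.compl_mem_cocompact) hfar

end Singleton

lemma not_weaklyLocallyCompactSpace_rat : ¬ WeaklyLocallyCompactSpace ℚ := by
  intro _
  obtain ⟨K, hK, hK0⟩ := exists_compact_mem_nhds (0 : ℚ)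
  have h0 : (0 : ℚ) ∈ interior K := mem_interior_iff_mem_nhds.2 hK0
  rwa [Rat.interior_compact_eq_empty hK] at h0

theorem tauFarMiss_not_subset_tauStrongFarMiss_general {X : Type*} [TopologicalSpace X]
    [T2Space X] (hX : ¬ WeaklyLocallyCompactSpace X) :
    ∃ U : Set (CL X), (farMissTopology X).IsOpen U ∧ ¬ (strongFarMissTopology X).IsOpen U := by
  obtain ⟨p, hp⟩ : ∃ p : X, ∀ K ∈ 𝓝 p, ¬ IsCompact K := by
    contrapose! hX
    exact ⟨fun p => (hX p).imp fun _ hK => hK.symm⟩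
  by_contra! hsub
  have hle : strongFarMissTopology X ≤ farMissTopology X := hsub
  let _ := farMissTopology X
  have hid : Tendsto id (cocompact X) (𝓝 p) :=
    isInducing_singleton_farMissTopology.tendsto_nhds_iff.2
      ((tendsto_singleton_cocompact_strongFarMissTopology hp).mono_right (nhds_mono hle))
  have huniv : IsCompact (univ : Set X) := by
    simpa using hid.isCompact_insert_range_of_cocompact continuous_id
  exact hp univ univ_mem huniv

/-- On `CL(ℚ)` with the Alexandroff proximity, `τ_δ⁺⁺` is not contained in
`τ_⩥⁺`: some `τ_δ⁺⁺`-open set is not `τ_⩥⁺`-open. -/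
theorem tauFarMiss_not_subset_tauStrongFarMiss :
    ∃ U : Set CLQ, tauFarMiss.IsOpen U ∧ ¬ tauStrongFarMiss.IsOpen U :=
  tauFarMiss_not_subset_tauStrongFarMiss_general not_weaklyLocallyCompactSpace_rat
end

section
/- Let X be a T1 topological space. Then the Alexandroff proximity δ_A is a separated Lodato proximity compatible with the topology of X: it satisfies axioms (P0)–(P4), satisfies {x} δ_A {y} → x = y, and for every A ⊆ X, closure(A) = {x ∈ X : {x} δ_A A}. -/
section

variable {X : Type*} [TopologicalSpace X] {A B C : Set X} {x : X}

lemma isCompact_closure_union :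
    IsCompact (closure (A ∪ B)) ↔ IsCompact (closure A) ∧ IsCompact (closure B) where
  mp h := ⟨h.of_isClosed_subset isClosed_closure (closure_mono Set.subset_union_left),
    h.of_isClosed_subset isClosed_closure (closure_mono Set.subset_union_right)⟩
  mpr h := by simpa only [closure_union] using h.1.union h.2

lemma alexRel.symm (h : alexRel A B) : alexRel B A :=
  h.imp (fun hAB => by rwa [Set.inter_comm]) And.symm

lemma alexRel.nonempty_right (h : alexRel A B) : B.Nonempty := by
  rcases h with hAB | ⟨-, hB⟩
  · exact closure_nonempty_iff.mp hAB.right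
  · refine Set.nonempty_iff_ne_empty.mpr ?_
    rintro rfl
    simp at hB

lemma alexRel.nonempty_left (h : alexRel A B) : A.Nonempty :=
  h.symm.nonempty_right

lemma alexRel_of_inter_nonempty (h : (A ∩ B).Nonempty) : alexRel A B :=
  Or.inl (h.mono (Set.inter_subset_inter subset_closure subset_closure))

lemma alexRel_union_right : alexRel A (B ∪ C) ↔ alexRel A B ∨ alexRel A C := by
  have closures_meet : (closure A ∩ closure (B ∪ C)).Nonempty ↔
      (closure A ∩ closure B).Nonempty ∨ (closure A ∩ closure C).Nonempty := by
    rw [closure_union, Set.inter_union_distrib_left, Set.union_nonempty]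
  simp only [alexRel, closures_meet, isCompact_closure_union]
  tauto

lemma alexRel.mono_right_of_subset_closure (h : alexRel A B) (hBC : B ⊆ closure C) :
    alexRel A C := by
  have hcl : closure B ⊆ closure C := closure_minimal hBC isClosed_closure
  exact h.imp (fun hAB => hAB.mono (Set.inter_subset_inter_right _ hcl))
    (And.imp_right fun hB hC => hB (hC.of_isClosed_subset isClosed_closure hcl))

lemma alexRel_singleton_left [R0Space X] : alexRel {x} A ↔ x ∈ closure A := by
  constructor
  · rintro (⟨y, hyx, hyA⟩ | ⟨hx, -⟩)
    · have hxy : x ⤳ y := specializes_iff_mem_closure.mpr hyx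
      exact hxy.symm.mem_closed isClosed_closure hyA
    · exact absurd isCompact_closure_singleton hx
  · exact fun hx => Or.inl ⟨x, subset_closure rfl, hx⟩

lemma alexRel.of_forall_singleton [R0Space X] (h : alexRel A B)
    (hBC : ∀ b ∈ B, alexRel {b} C) : alexRel A C :=
  h.mono_right_of_subset_closure fun b hb => alexRel_singleton_left.mp (hBC b hb)

lemma alexRel_singleton_singleton [T1Space X] {y : X} : alexRel {x} {y} ↔ x = y := by
  rw [alexRel_singleton_left, closure_singleton, Set.mem_singleton_iff]

lemma closure_eq_setOf_alexRel_singleton [R0Space X] (A : Set X) :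
    closure A = {x | alexRel {x} A} :=
  Set.ext fun _ => alexRel_singleton_left.symm

end

/-- For a T1 space, the Alexandroff proximity is a separated Lodato proximity
compatible with the topology. -/
theorem alexRel_isSeparatedCompatibleLodato {X : Type*} [TopologicalSpace X]
    [T1Space X] :
    (∀ A B : Set X, alexRel A B → alexRel B A) ∧
    (∀ A B : Set X, alexRel A B → A ≠ ∅ ∧ B ≠ ∅) ∧
    (∀ A B : Set X, A ∩ B ≠ ∅ → alexRel A B) ∧
    (∀ A B C : Set X, alexRel A (B ∪ C) ↔ alexRel A B ∨ alexRel A C) ∧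
    (∀ A B C : Set X, alexRel A B → (∀ b ∈ B, alexRel {b} C) → alexRel A C) ∧
    (∀ x y : X, alexRel {x} {y} → x = y) ∧
    (∀ A : Set X, closure A = {x : X | alexRel {x} A}) :=
  ⟨fun _ _ => alexRel.symm,
    fun _ _ h => ⟨h.nonempty_left.ne_empty, h.nonempty_right.ne_empty⟩,
    fun _ _ h => alexRel_of_inter_nonempty (Set.nonempty_iff_ne_empty.mpr h),
    fun _ _ _ => alexRel_union_right,
    fun _ _ _ => alexRel.of_forall_singleton,
    fun _ _ => alexRel_singleton_singleton.mp,
    closure_eq_setOf_alexRel_singleton⟩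
end

section
/- Let X be a topological space and δ a compatible basic proximity on X satisfying the EF property. If K ⊆ X is compact, W ⊆ X is open, and K ⊆ W, then K is strongly included in W, i.e., K ≁ X \ W. -/
/-!
Being far from `Wᶜ` is inherited by subsets and finite unions, so by compactness it suffices that
every `x ∈ K` has a neighbourhood far from `Wᶜ`. By compatibility `{x} ≁ Wᶜ`, and the Efremovič
property yields `E` with `{x} ≁ E` and `Eᶜ ≁ Wᶜ`; by compatibility again `x ∉ closure E`, so `Eᶜ`
is such a neighbourhood.
-/

/-- A basic proximity on a set (type) `X`: a relation on subsets of `X`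
satisfying axioms (P0)–(P3). -/
structure BasicProximity (X : Type*) where
  rel : Set X → Set X → Prop
  symm : ∀ A B : Set X, rel A B → rel B A
  nonempty_of_rel : ∀ A B : Set X, rel A B → A ≠ ∅ ∧ B ≠ ∅
  rel_of_inter : ∀ A B : Set X, A ∩ B ≠ ∅ → rel A B
  rel_union : ∀ A B C : Set X, rel A (B ∪ C) ↔ rel A B ∨ rel A C

/-- The Efremovič property: whenever `A ≁ B` there is `E` with `A ≁ E` and
`X \ E ≁ B`. -/
def BasicProximity.EF {X : Type*} (δ : BasicProximity X) : Prop :=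
  ∀ A B : Set X, ¬ δ.rel A B → ∃ E : Set X, ¬ δ.rel A E ∧ ¬ δ.rel Eᶜ B

/-- `δ` is compatible with the topology of `X`:
`closure A = {x : {x} δ A}` for every `A`. -/
def BasicProximity.Compatible {X : Type*} [TopologicalSpace X]
    (δ : BasicProximity X) : Prop :=
  ∀ A : Set X, closure A = {x : X | δ.rel {x} A}

namespace BasicProximity

open scoped Topology

variable {X : Type*} {δ : BasicProximity X} {A B C : Set X}

theorem rel_comm : δ.rel A B ↔ δ.rel B A :=
  ⟨δ.symm A B, δ.symm B A⟩

theorem not_rel_empty_left : ¬ δ.rel ∅ A :=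
  fun h => (δ.nonempty_of_rel _ _ h).1 rfl

theorem rel_union_left : δ.rel (A ∪ B) C ↔ δ.rel A C ∨ δ.rel B C := by
  simp only [rel_comm (B := C), δ.rel_union]

theorem rel_mono_left (hAB : A ⊆ B) (hAC : δ.rel A C) : δ.rel B C := by
  rw [← Set.union_eq_self_of_subset_left hAB]
  exact rel_union_left.2 (Or.inl hAC)

/-- The Efremovič property for pairs whose first member is a point: whenever `{x} ≁ A` there is
`E` with `{x} ≁ E` and `X \ E ≁ A`. This is the separation axiom of an R-proximity. -/
def PointwiseEF (δ : BasicProximity X) : Prop :=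
  ∀ (x : X) (A : Set X), ¬ δ.rel {x} A → ∃ E : Set X, ¬ δ.rel {x} E ∧ ¬ δ.rel Eᶜ A

theorem EF.pointwiseEF (hEF : δ.EF) : δ.PointwiseEF :=
  fun x => hEF {x}

variable [TopologicalSpace X]

theorem Compatible.mem_closure_iff (hδ : δ.Compatible) {x : X} :
    x ∈ closure A ↔ δ.rel {x} A := by
  rw [hδ A, Set.mem_ofPred_eq]

theorem Compatible.exists_mem_nhds_not_rel (hδ : δ.Compatible) (hEF : δ.PointwiseEF) {x : X}
    (hx : x ∉ closure A) : ∃ U ∈ 𝓝 x, ¬ δ.rel U A := by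
  obtain ⟨E, hxE, hEA⟩ := hEF x A (mt hδ.mem_closure_iff.2 hx)
  have hE : x ∉ closure E := mt hδ.mem_closure_iff.1 hxE
  refine ⟨Eᶜ, ?_, hEA⟩
  rwa [← mem_interior_iff_mem_nhds, interior_compl]

theorem not_rel_of_isCompact_of_forall_nhdsWithin {K : Set X} (hK : IsCompact K)
    (hlocal : ∀ x ∈ K, ∃ U ∈ 𝓝[K] x, ¬ δ.rel U A) : ¬ δ.rel K A :=
  hK.induction_on (p := fun S => ¬ δ.rel S A) not_rel_empty_left
    (fun _ _ hST hT hS => hT (rel_mono_left hST hS))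
    (fun _ _ hS hT hST => (rel_union_left.1 hST).elim hS hT)
    hlocal

end BasicProximity

theorem compact_strongly_included_of_subset_open_general {X : Type*} [TopologicalSpace X]
    {δ : BasicProximity X} (hδ : δ.Compatible) (hEF : δ.PointwiseEF)
    {K W : Set X} (hK : IsCompact K) (hKW : K ⊆ interior W) :
    ¬ δ.rel K Wᶜ := by
  refine BasicProximity.not_rel_of_isCompact_of_forall_nhdsWithin hK fun x hx => ?_
  have hxW : x ∉ closure Wᶜ := by
    rw [closure_compl]
    exact Set.notMem_compl_iff.2 (hKW hx)
  obtain ⟨U, hU, hUW⟩ := hδ.exists_mem_nhds_not_rel hEF hxW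
  exact ⟨U, mem_nhdsWithin_of_mem_nhds hU, hUW⟩

/-- For a compatible EF basic proximity, a compact set contained in an open
set is strongly included in it. -/
theorem compact_strongly_included_of_subset_open {X : Type*} [TopologicalSpace X]
    (δ : BasicProximity X) (hδ : δ.Compatible) (hEF : δ.EF)
    (K W : Set X) (hK : IsCompact K) (hW : IsOpen W) (hKW : K ⊆ W) :
    ¬ δ.rel K Wᶜ :=
  compact_strongly_included_of_subset_open_general hδ hEF.pointwiseEF hK
    (hW.interior_eq.symm ▸ hKW)
end
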